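/- arXiv:1705.09195 — 2 statements merged into one kernel-verified Lean document; each statement's English description precedes it below -/
import Mathlib

section
/- Let X ⊆ P² be a k-configuration of type (d₁,…,d_s) defined using lines L₁,…,L_s. If for some index i the line L_i satisfies |L_i ∩ X| = d_s, then d_j = d_s − s + j for every j = i, i+1, …, s. -/
/-- The projective plane over a field `K`, as the projectivization of `K³`. -/
abbrev P2 (K : Type) [Field K] := Projectivization K (Fin 3 → K)

/-- A line in `P2 K`: a 2-dimensional linear subspace of `K³`. -/
structure ProjLine (K : Type) [Field K] where
  toSubmodule : Submodule K (Fin 3 → K)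
  finrank_eq_two : Module.finrank K toSubmodule = 2

/-- The set of points of `P2 K` lying on a line. -/
def ProjLine.points {K : Type} [Field K] (L : ProjLine K) : Set (P2 K) :=
  {p | p.submodule ≤ L.toSubmodule}

/-- The homogeneous prime ideal of a point of `P2 K`: the ideal generated by
the linear forms vanishing at the point. -/
noncomputable def pointIdeal {K : Type} [Field K] (p : P2 K) :
    Ideal (MvPolynomial (Fin 3) K) :=
  Ideal.span {f | f.IsHomogeneous 1 ∧ MvPolynomial.eval p.rep f = 0}

/-- The defining ideal `I_{mX} = ⋂_{P ∈ X} I_P^m` of the fat point scheme `mX`. -/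
noncomputable def fatIdeal {K : Type} [Field K] (X : Set (P2 K)) (m : ℕ) :
    Ideal (MvPolynomial (Fin 3) K) :=
  ⨅ p ∈ X, (pointIdeal p) ^ m

/-- The Hilbert function of `R/I`: `H(t) = dim_K R_t - dim_K I_t`. -/
noncomputable def hilb {K : Type} [Field K] (I : Ideal (MvPolynomial (Fin 3) K)) (t : ℕ) : ℕ :=
  Module.finrank K ↥(MvPolynomial.homogeneousSubmodule (Fin 3) K t) -
    Module.finrank K ↥(Submodule.restrictScalars K (I : Submodule (MvPolynomial (Fin 3) K) (MvPolynomial (Fin 3) K)) ⊓ MvPolynomial.homogeneousSubmodule (Fin 3) K t)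

/-- The Hilbert function extended to `ℤ`, with `H(t) = 0` for `t < 0`. -/
noncomputable def hilbZ {K : Type} [Field K] (I : Ideal (MvPolynomial (Fin 3) K)) (t : ℤ) : ℤ :=
  if t < 0 then 0 else hilb I t.toNat

/-- The first difference `ΔH(t) = H(t) - H(t-1)` of the Hilbert function. -/
noncomputable def deltaHilb {K : Type} [Field K] (I : Ideal (MvPolynomial (Fin 3) K)) (t : ℤ) : ℤ :=
  hilbZ I t - hilbZ I (t - 1)

/-- `X` is a k-configuration of type `(d 0, …, d (s-1))` defined using the subsets
`Xs 0, …, Xs (s-1)` and the (distinct) lines `Ls 0, …, Ls (s-1)`. -/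
structure IsKConfig {K : Type} [Field K] {s : ℕ} (X : Set (P2 K)) (d : Fin s → ℕ)
    (Xs : Fin s → Set (P2 K)) (Ls : Fin s → ProjLine K) : Prop where
  one_le : ∀ i, 1 ≤ d i
  strictMono : StrictMono d
  lines_distinct : Function.Injective Ls
  union_eq : X = ⋃ i, Xs i
  card_eq : ∀ i, (Xs i).ncard = d i
  subset_line : ∀ i, Xs i ⊆ (Ls i).points
  not_mem : ∀ i j : Fin s, j < i → ∀ p ∈ Xs j, p ∉ (Ls i).points

theorem line_inter_subsingleton {K : Type} [Field K] {L M : ProjLine K} (h : L ≠ M) {p q : P2 K}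
    (hpL : p ∈ L.points) (hpM : p ∈ M.points) (hqL : q ∈ L.points) (hqM : q ∈ M.points) :
    p = q := by
  have hne : L.toSubmodule ≠ M.toSubmodule := by
    intro he
    apply h
    cases L; cases M; simp_all
  have hlt : Module.finrank K ↥(L.toSubmodule ⊓ M.toSubmodule) ≤ 1 := by
    by_contra hc
    push Not at hc
    have h1 : L.toSubmodule ⊓ M.toSubmodule = L.toSubmodule :=
      Submodule.eq_of_le_of_finrank_le inf_le_left (by rw [L.finrank_eq_two]; omega)
    have h2 : L.toSubmodule ⊓ M.toSubmodule = M.toSubmodule :=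
      Submodule.eq_of_le_of_finrank_le inf_le_right (by rw [M.finrank_eq_two]; omega)
    exact hne (h1.symm.trans h2)
  have key : ∀ r : P2 K, r ∈ L.points → r ∈ M.points →
      r.submodule = L.toSubmodule ⊓ M.toSubmodule := by
    intro r hL hM
    exact Submodule.eq_of_le_of_finrank_le (le_inf hL hM)
      (by rw [Projectivization.finrank_submodule]; exact hlt)
  exact Projectivization.submodule_injective ((key p hpL hpM).trans (key q hqL hqM).symm)

/-- **Lemma (necessary conditions), part (ii).** If `X` is a k-configuration of
type `(d₁,…,d_s)` and the defining line `L_i` contains exactly `d_s` points of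
`X`, then `d_j = d_s − s + j` for all `j = i,…,s`. -/
theorem kconfig_tail_consecutive {K : Type} [Field K] [IsAlgClosed K] {s : ℕ} (hs : 0 < s)
    (X : Set (P2 K)) (d : Fin s → ℕ) (Xs : Fin s → Set (P2 K)) (Ls : Fin s → ProjLine K)
    (hX : IsKConfig X d Xs Ls)
    (ds : ℕ) (hds : ds = d ⟨s - 1, Nat.sub_lt hs Nat.one_pos⟩)
    (i : Fin s) (hi : (X ∩ (Ls i).points).ncard = ds) :
    ∀ j : Fin s, i ≤ j → (d j : ℤ) = (ds : ℤ) - s + (j.1 + 1) := by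
  have hfin : ∀ j, (Xs j).Finite := fun j =>
    Set.finite_of_ncard_pos (by rw [hX.card_eq]; exact hX.one_le j)
  have hsub : X ∩ (Ls i).points ⊆ Xs i ∪ ⋃ j ∈ Finset.Ioi i, (Xs j ∩ (Ls i).points) := by
    rintro p ⟨hp, hpL⟩
    rw [hX.union_eq] at hp
    obtain ⟨j, hj⟩ := Set.mem_iUnion.1 hp
    rcases lt_trichotomy j i with h | h | h
    · exact absurd hpL (hX.not_mem i j h p hj)
    · subst h; exact Or.inl hj
    · refine Or.inr ?_
      simp only [Set.mem_iUnion]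
      exact ⟨j, Finset.mem_Ioi.2 h, hj, hpL⟩
  have hone : ∀ j ∈ Finset.Ioi i, (Xs j ∩ (Ls i).points).ncard ≤ 1 := by
    intro j hj
    rw [Set.ncard_le_one ((hfin j).inter_of_left _)]
    intro a ha b hb
    have hne : Ls j ≠ Ls i := fun he => (Finset.mem_Ioi.1 hj).ne' (hX.lines_distinct he)
    exact line_inter_subsingleton hne (hX.subset_line j ha.1) ha.2 (hX.subset_line j hb.1) hb.2
  have hU : (⋃ j ∈ Finset.Ioi i, (Xs j ∩ (Ls i).points)).ncard ≤ s - 1 - i := by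
    refine (Finset.set_ncard_biUnion_le _ _).trans ?_
    refine (Finset.sum_le_card_nsmul _ _ 1 hone).trans ?_
    simp
  have hle : ds ≤ d i + (s - 1 - i) := by
    rw [← hi, ← hX.card_eq i]
    refine (Set.ncard_le_ncard hsub ?_).trans ((Set.ncard_union_le _ _).trans (by omega))
    exact (hfin i).union ((Finset.Ioi i).finite_toSet.biUnion
      fun j _ => (hfin j).inter_of_left _)
  have hmono : ∀ n : ℕ, ∀ a b : Fin s, (b : ℕ) = a + n → d a + n ≤ d b := by
    intro n
    induction n with
    | zero => intro a b h; rw [show a = b from Fin.ext (by omega)]; omega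
    | succ n ih =>
      intro a b h
      have hb := b.2
      have h1 := ih a ⟨a + n, by omega⟩ rfl
      have h2 : d ⟨a + n, by omega⟩ < d b := hX.strictMono (Fin.lt_def.2 (by simp; omega))
      omega
  intro j hij
  have hij' : (i : ℕ) ≤ j := hij
  have hj := j.2
  have h1 := hmono (j - i) i j (by omega)
  have h2 := hmono (s - 1 - j) j ⟨s - 1, Nat.sub_lt hs Nat.one_pos⟩ (by simp; omega)
  rw [← hds] at h2
  omega
end

section
/- Let X ⊆ P² be a k-configuration of type (d₁,…,d_s) with s ≥ 2. Then there exist subsets X'₁,…,X'_s and lines L'₁,…,L'_s defining X as a k-configuration of type (d₁,…,d_s), together with an integer r ≥ 0, such that |L'_{s−j} ∩ X| = d_s for all 0 ≤ j ≤ r−1 and |L'_{s−j} ∩ X| < d_s for all r ≤ j ≤ s−1. -/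
theorem ProjLine.inter_subsingleton {K : Type} [Field K] {L M : ProjLine K} (h : L ≠ M) :
    (L.points ∩ M.points).Subsingleton := by
  have hne : L.toSubmodule ≠ M.toSubmodule := by
    intro e; apply h; cases L; cases M; simp_all
  have hlt : Module.finrank K ↥(L.toSubmodule ⊓ M.toSubmodule) ≤ 1 := by
    by_contra hc
    have h1 : L.toSubmodule ⊓ M.toSubmodule = L.toSubmodule :=
      Submodule.eq_of_le_of_finrank_le inf_le_left (by rw [L.finrank_eq_two]; omega)
    have h2 : L.toSubmodule ⊓ M.toSubmodule = M.toSubmodule :=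
      Submodule.eq_of_le_of_finrank_le inf_le_right (by rw [M.finrank_eq_two]; omega)
    exact hne (h1.symm.trans h2)
  have key : ∀ p ∈ L.points ∩ M.points, p.submodule = L.toSubmodule ⊓ M.toSubmodule := by
    intro p hp
    exact Submodule.eq_of_le_of_finrank_le (le_inf hp.1 hp.2)
      (by rw [p.finrank_submodule]; exact hlt)
  intro p hp q hq
  exact Projectivization.submodule_injective ((key p hp).trans (key q hq).symm)

section
variable {K : Type} [Field K] {s : ℕ} {X : Set (P2 K)} {d : Fin s → ℕ}
  {Xs : Fin s → Set (P2 K)} {Ls : Fin s → ProjLine K}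

theorem IsKConfig.fin (h : IsKConfig X d Xs Ls) (i : Fin s) : (Xs i).Finite := by
  apply Set.finite_of_ncard_ne_zero
  have := h.one_le i
  rw [h.card_eq]; omega

theorem IsKConfig.bound (h : IsKConfig X d Xs Ls) (i : Fin s) (T : Finset (Fin s))
    (hT : ∀ j, i < j → (Xs j ∩ (Ls i).points).Nonempty → j ∈ T) (hi : i ∉ T) :
    (X ∩ (Ls i).points).ncard ≤ d i + T.card := by
  have hsub : X ∩ (Ls i).points ⊆ Xs i ∪ ⋃ j ∈ T, (Xs j ∩ (Ls i).points) := by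
    rintro p ⟨hp, hpL⟩
    rw [h.union_eq] at hp
    obtain ⟨j, hj⟩ := Set.mem_iUnion.1 hp
    rcases lt_trichotomy j i with hlt | rfl | hlt
    · exact absurd hpL (h.not_mem i j hlt p hj)
    · exact Or.inl hj
    · exact Or.inr (Set.mem_biUnion (hT j hlt ⟨p, hj, hpL⟩) ⟨hj, hpL⟩)
  have hfin : (⋃ j ∈ T, (Xs j ∩ (Ls i).points)).Finite :=
    T.finite_toSet.biUnion (fun j _ => (h.fin j).inter_of_left _)
  calc (X ∩ (Ls i).points).ncard
      ≤ (Xs i ∪ ⋃ j ∈ T, (Xs j ∩ (Ls i).points)).ncard :=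
        Set.ncard_le_ncard hsub ((h.fin i).union hfin)
    _ ≤ (Xs i).ncard + (⋃ j ∈ T, (Xs j ∩ (Ls i).points)).ncard := Set.ncard_union_le _ _
    _ ≤ d i + T.card := by
        rw [h.card_eq]
        gcongr
        refine (Finset.set_ncard_biUnion_le _ _).trans ?_
        rw [Finset.card_eq_sum_ones]
        refine Finset.sum_le_sum fun j hj => ?_
        rw [Set.ncard_le_one ((h.fin j).inter_of_left _)]
        intro a ha b hb
        have hne : Ls j ≠ Ls i := fun e => hi (h.lines_distinct e ▸ hj)
        exact ProjLine.inter_subsingleton hne ⟨h.subset_line j ha.1, ha.2⟩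
          ⟨h.subset_line j hb.1, hb.2⟩

theorem strictMono_gap {d : Fin s → ℕ} (hd : StrictMono d) (i : Fin s) (m : ℕ) :
    ∀ k : Fin s, i.val + m = k.val → d i + m ≤ d k := by
  induction m with
  | zero => intro k hk; have : i = k := Fin.ext hk; simp [this]
  | succ m ih =>
    intro k hk
    have h1 := ih ⟨i.val + m, by omega⟩ rfl
    have h2 : d ⟨i.val + m, by omega⟩ < d k := hd (by rw [Fin.lt_def]; simp; omega)
    omega

theorem IsKConfig.le (h : IsKConfig X d Xs Ls) (i l : Fin s) (hl : l.val = s - 1) :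
    (X ∩ (Ls i).points).ncard ≤ d l := by
  have h1 := h.bound i (Finset.Ioi i) (by intro j hj _; simpa using hj) (by simp)
  rw [Fin.card_Ioi] at h1
  have := strictMono_gap h.strictMono i (s - 1 - i) l (by omega)
  omega

theorem IsKConfig.full (h : IsKConfig X d Xs Ls) (i k l : Fin s) (hl : l.val = s - 1)
    (hk : k.val = i.val + 1) (hf : (X ∩ (Ls i).points).ncard = d l) :
    d k = d i + 1 ∧ ∃ p ∈ Xs k, p ∈ (Ls i).points := by
  have h1 := h.bound i (Finset.Ioi i) (by intro j hj _; simpa using hj) (by simp)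
  rw [Fin.card_Ioi] at h1
  have g0 := strictMono_gap h.strictMono i (s - 1 - i) l (by omega)
  have g1 := strictMono_gap h.strictMono k (s - 1 - k) l (by omega)
  have g2 := strictMono_gap h.strictMono i 1 k (by omega)
  refine ⟨by omega, ?_⟩
  by_contra hc
  push Not at hc
  have h2 := h.bound i (Finset.Ioi k) (by
    rintro j hj ⟨p, hp⟩
    rw [Finset.mem_Ioi, Fin.lt_def]
    have : j ≠ k := by rintro rfl; exact hc p hp.1 hp.2
    have : j.val ≠ k.val := fun e => this (Fin.ext e)
    rw [Fin.lt_def] at hj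
    omega) (by rw [Finset.mem_Ioi, Fin.lt_def]; omega)
  rw [Fin.card_Ioi] at h2
  omega

theorem IsKConfig.swap (h : IsKConfig X d Xs Ls) (i k l : Fin s) (hl : l.val = s - 1)
    (hk : k.val = i.val + 1) (hf : (X ∩ (Ls i).points).ncard = d l) :
    ∃ Xs', IsKConfig X d Xs' (Ls ∘ Equiv.swap i k) := by
  classical
  obtain ⟨hd, p, hpk, hpi⟩ := h.full i k l hl hk hf
  have hik : i < k := by rw [Fin.lt_def]; omega
  have hne : i ≠ k := hik.ne
  have hp : p ∉ Xs i := fun hpi' => h.not_mem k i hik p hpi' (h.subset_line k hpk)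
  have huniq : ∀ q ∈ Xs k, q ∈ (Ls i).points → q = p := fun q hq hqi =>
    ProjLine.inter_subsingleton (h.lines_distinct.ne hne) ⟨hqi, h.subset_line k hq⟩
      ⟨hpi, h.subset_line k hpk⟩
  let Y : Fin s → Set (P2 K) := fun j =>
    if j = i then Xs k \ {p} else if j = k then insert p (Xs i) else Xs j
  have Yi : Y i = Xs k \ {p} := by simp [Y]
  have Yk : Y k = insert p (Xs i) := by simp [Y, hne.symm]
  have Yo : ∀ j, j ≠ i → j ≠ k → Y j = Xs j := by intro j h1 h2; simp [Y, h1, h2]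
  have Lo : ∀ j, j ≠ i → j ≠ k → (Ls ∘ Equiv.swap i k) j = Ls j := by
    intro j h1 h2; simp [Equiv.swap_apply_of_ne_of_ne h1 h2]
  have Li : (Ls ∘ Equiv.swap i k) i = Ls k := by simp
  have Lk : (Ls ∘ Equiv.swap i k) k = Ls i := by simp
  refine ⟨Y, h.one_le, h.strictMono, h.lines_distinct.comp (Equiv.injective _), ?_, ?_, ?_, ?_⟩
  · rw [h.union_eq]
    ext q
    simp only [Set.mem_iUnion]
    constructor
    · rintro ⟨j, hj⟩
      by_cases h1 : j = i
      · subst h1; exact ⟨k, by rw [Yk]; exact Or.inr hj⟩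
      by_cases h2 : j = k
      · subst h2
        by_cases hq : q = p
        · exact ⟨j, by rw [Yk]; exact Or.inl hq⟩
        · exact ⟨i, by rw [Yi]; exact ⟨hj, hq⟩⟩
      exact ⟨j, by rw [Yo j h1 h2]; exact hj⟩
    · rintro ⟨j, hj⟩
      by_cases h1 : j = i
      · subst h1; rw [Yi] at hj; exact ⟨k, hj.1⟩
      by_cases h2 : j = k
      · subst h2; rw [Yk] at hj
        rcases hj with rfl | hj
        · exact ⟨j, hpk⟩
        · exact ⟨i, hj⟩
      rw [Yo j h1 h2] at hj; exact ⟨j, hj⟩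
  · intro j
    by_cases h1 : j = i
    · subst h1
      rw [Yi, Set.ncard_sdiff_singleton_of_mem hpk, h.card_eq]; omega
    by_cases h2 : j = k
    · subst h2
      rw [Yk, Set.ncard_insert_of_notMem hp (h.fin i), h.card_eq]; omega
    rw [Yo j h1 h2]; exact h.card_eq j
  · intro j
    by_cases h1 : j = i
    · subst h1
      rw [Yi, Li]; exact Set.sdiff_subset.trans (h.subset_line k)
    by_cases h2 : j = k
    · subst h2
      rw [Yk, Lk]; exact Set.insert_subset hpi (h.subset_line i)
    rw [Yo j h1 h2, Lo j h1 h2]; exact h.subset_line j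
  · intro a b hab q hq
    have hbk : ∀ j, j ≠ i → j ≠ k → (j < i ↔ j < k) := by
      intro j h1 h2
      have h1' : j.val ≠ i.val := fun e => h1 (Fin.ext e)
      have h2' : j.val ≠ k.val := fun e => h2 (Fin.ext e)
      rw [Fin.lt_def, Fin.lt_def]; omega
    -- the point `q` comes from an old subset
    by_cases a1 : a = i
    · subst a1
      have b1 : b ≠ a := hab.ne
      have b2 : b ≠ k := (hab.trans hik).ne
      rw [Yo b b1 b2] at hq
      rw [Li]; exact h.not_mem k b (hab.trans hik) q hq
    by_cases a2 : a = k
    · subst a2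
      rw [Lk]
      by_cases b1 : b = i
      · subst b1
        rw [Yi] at hq
        exact fun hc => hq.2 (huniq q hq.1 hc)
      · rw [Yo b b1 hab.ne] at hq
        exact h.not_mem i b ((hbk b b1 hab.ne).2 hab) q hq
    rw [Lo a a1 a2]
    by_cases b1 : b = i
    · subst b1
      rw [Yi] at hq
      refine h.not_mem a k ?_ q hq.1
      rcases lt_or_ge a k with hlt | hge
      · exact absurd ((hbk a a1 a2).2 hlt) (not_lt.2 hab.le)
      · exact lt_of_le_of_ne hge (Ne.symm a2)
    by_cases b2 : b = k
    · subst b2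
      rw [Yk] at hq
      rcases hq with rfl | hq
      · exact h.not_mem a b hab q hpk
      · exact h.not_mem a i (hik.trans hab) q hq
    rw [Yo b b1 b2] at hq
    exact h.not_mem a b hab q hq

open Classical in
theorem IsKConfig.sorted (l : Fin s) (hl : l.val = s - 1) (n : ℕ) :
    ∀ (Xs : Fin s → Set (P2 K)) (Ls : Fin s → ProjLine K), IsKConfig X d Xs Ls →
    (∑ i : Fin s, i.val) ≤
      (∑ i : Fin s, if (X ∩ (Ls i).points).ncard = d l then i.val else 0) + n →
    ∃ (Xs' : Fin s → Set (P2 K)) (Ls' : Fin s → ProjLine K), IsKConfig X d Xs' Ls' ∧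
      ∀ i k : Fin s, k.val = i.val + 1 → (X ∩ (Ls' i).points).ncard = d l →
        (X ∩ (Ls' k).points).ncard = d l := by
  induction n with
  | zero =>
    intro Xs Ls h hsum
    refine ⟨Xs, Ls, h, ?_⟩
    intro i k hk _
    by_contra hc
    refine absurd hsum (not_le.2 ?_)
    rw [add_zero]
    refine Finset.sum_lt_sum (fun j _ => by split_ifs <;> omega) ⟨k, Finset.mem_univ _, ?_⟩
    rw [if_neg hc]; omega
  | succ n ih =>
    intro Xs Ls h hsum
    by_cases hall : ∀ i k : Fin s, k.val = i.val + 1 → (X ∩ (Ls i).points).ncard = d l →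
        (X ∩ (Ls k).points).ncard = d l
    · exact ⟨Xs, Ls, h, hall⟩
    push Not at hall
    obtain ⟨i, k, hk, hf, hnf⟩ := hall
    obtain ⟨Y, hY⟩ := h.swap i k l hl hk hf
    refine ih Y _ hY ?_
    have e : (∑ j : Fin s, if (X ∩ ((Ls ∘ Equiv.swap i k) j).points).ncard = d l
        then j.val else 0) = ∑ j : Fin s, if (X ∩ (Ls j).points).ncard = d l
        then (Equiv.swap i k j).val else 0 := by
      rw [← Equiv.sum_comp (Equiv.swap i k)]
      simp
    have hlt : (∑ j : Fin s, if (X ∩ (Ls j).points).ncard = d l then j.val else 0) <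
        ∑ j : Fin s, if (X ∩ (Ls j).points).ncard = d l
        then (Equiv.swap i k j).val else 0 := by
      refine Finset.sum_lt_sum (fun j _ => ?_) ⟨i, Finset.mem_univ _, ?_⟩
      · by_cases h1 : j = i
        · subst h1; simp [hf]; omega
        by_cases h2 : j = k
        · subst h2; simp [hnf]
        rw [Equiv.swap_apply_of_ne_of_ne h1 h2]
      · simp [hf]; omega
    rw [e]; omega
end

/-- **Corollary (relabelling).** Let `X` be a k-configuration of type
`(d₁,…,d_s)`, `s ≥ 2`. After relabelling, we may assume there is an `r` such
that the last `r` defining lines each contain exactly `d_s` points of `X`,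
while the remaining defining lines contain fewer than `d_s` points of `X`. -/
theorem kconfig_relabel_cor {K : Type} [Field K] [IsAlgClosed K] {s : ℕ} (hs : 2 ≤ s)
    (X : Set (P2 K)) (d : Fin s → ℕ) (Xs : Fin s → Set (P2 K)) (Ls : Fin s → ProjLine K)
    (hX : IsKConfig X d Xs Ls)
    (ds : ℕ) (hds : ds = d ⟨s - 1, by omega⟩) :
    ∃ (Xs' : Fin s → Set (P2 K)) (Ls' : Fin s → ProjLine K) (r : ℕ),
      r ≤ s ∧ IsKConfig X d Xs' Ls' ∧
      (∀ j : ℕ, j < r → (X ∩ (Ls' ⟨s - 1 - j, by omega⟩).points).ncard = ds) ∧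
      (∀ j : ℕ, r ≤ j → j ≤ s - 1 →
        (X ∩ (Ls' ⟨s - 1 - j, by omega⟩).points).ncard < ds) := by
  obtain ⟨Xs', Ls', h, hup⟩ := IsKConfig.sorted (X := X) (d := d) ⟨s - 1, by omega⟩ rfl
    (∑ i : Fin s, i.val) Xs Ls hX (Nat.le_add_left _ _)
  rw [← hds] at hup
  classical
  let F : ℕ → Prop := fun r => ∀ hr : r < s, (X ∩ (Ls' ⟨s - 1 - r, by omega⟩).points).ncard ≠ ds
  have hF : ∃ r, F r := ⟨s, fun hr => absurd hr (lt_irrefl _)⟩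
  have hle : Nat.find hF ≤ s := Nat.find_min' hF (fun hr => absurd hr (lt_irrefl _))
  refine ⟨Xs', Ls', Nat.find hF, hle, h, ?_, ?_⟩
  · intro j hj
    have := Nat.find_min hF hj
    simp only [F] at this
    push Not at this
    exact this.2
  · intro j hj hjs
    refine lt_of_le_of_ne (hds ▸ h.le _ ⟨s - 1, by omega⟩ rfl) ?_
    intro hfull
    have key : ∀ m, ∀ hm : s - 1 - j ≤ m, ∀ hms : m < s,
        (X ∩ (Ls' ⟨m, hms⟩).points).ncard = ds := by
      intro m hm
      induction m, hm using Nat.le_induction with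
      | base => intro _; exact hfull
      | succ m hm ih => intro hms; exact hup ⟨m, by omega⟩ ⟨m + 1, hms⟩ rfl (ih (by omega))
    exact Nat.find_spec hF (by omega) (key _ (by omega) (by omega))
end
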